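/- arXiv:1312.7729 — 2 statements merged into one kernel-verified Lean document; each statement's English description precedes it below -/
import Mathlib

section
/- For real q with 0<q<1, a positive integer r, a Dirichlet character χ of odd conductor d, nonnegative integers m and n, and real numbers x and y: Σ_{k=0}^{m} C(m,k) q^{k·x} E^{(r)}_{n+k,χ,q}(y) [x]_q^{m-k} = Σ_{k=0}^{n} C(n,k) q^{-k·x} E^{(r)}_{m+k,χ,q}(x+y) [-x]_q^{n-k}, where C(m,k) is the binomial coefficient. -/
open scoped BigOperators

/-- The `q`-number `[x]_q = (1 - q^x)/(1 - q)` for real `q` and real `x`. -/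
noncomputable def qNum (q x : ℝ) : ℝ := (1 - q ^ x) / (1 - q)

/-- Generalized `q`-Euler polynomial of order `r` attached to a Dirichlet character `χ`:
`E^{(r)}_{n,χ,q}(x) = [2]_q^r Σ' (-q)^{m₁+⋯+m_r} (Π χ(mᵢ)) [m₁+⋯+m_r+x]_q^n`. -/
noncomputable def qEuler (r : ℕ) {d : ℕ} (χ : DirichletCharacter ℂ d) (q : ℝ)
    (n : ℕ) (x : ℝ) : ℂ :=
  ((qNum q 2 : ℝ) : ℂ) ^ r *
    ∑' m : Fin r → ℕ,
      ((-(q : ℂ)) ^ (∑ i, m i) * (∏ i, χ ((m i : ZMod d))) *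
        ((qNum q ((∑ i, m i : ℕ) + x) : ℝ) : ℂ) ^ n)

/-- Dirichlet-type multiple `q`-`l`-function
`l_{q,r}(s,x|χ) = [2]_q^r Σ' (-q)^{m₁+⋯+m_r} (Π χ(mᵢ)) [m₁+⋯+m_r+x]_q^{-s}`,
with principal complex powers of positive real bases. -/
noncomputable def qL (q : ℝ) (r : ℕ) {d : ℕ} (χ : DirichletCharacter ℂ d)
    (s : ℂ) (x : ℝ) : ℂ :=
  ((qNum q 2 : ℝ) : ℂ) ^ r *
    ∑' m : Fin r → ℕ,
      ((-(q : ℂ)) ^ (∑ i, m i) * (∏ i, χ ((m i : ZMod d))) *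
        ((qNum q ((∑ i, m i : ℕ) + x) : ℝ) : ℂ) ^ (-s))

/-- The `q`-power sum
`S^{(r)}_{n,i,q}(a|χ) = Σ_{j₁,…,j_r=0}^{a-1} (-1)^{j₁+⋯+j_r} (Π χ(j_l)) q^{(j₁+⋯+j_r)(n-i+1)} [j₁+⋯+j_r]_q^i`. -/
noncomputable def qS (r : ℕ) {d : ℕ} (χ : DirichletCharacter ℂ d)
    (n i : ℕ) (q : ℝ) (a : ℕ) : ℂ :=
  ∑ j ∈ Fintype.piFinset (fun _ : Fin r => Finset.range a),
    ((-1 : ℂ) ^ (∑ l, j l) * (∏ l, χ ((j l : ZMod d))) *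
      (q : ℂ) ^ ((∑ l, j l) * (n - i + 1)) *
      ((qNum q ((∑ l, j l : ℕ)) : ℝ) : ℂ) ^ i)

/-!
By the addition formula `[x + z]_q = [x]_q + q^x [z]_q` and the binomial theorem, the left-hand side
is the mixed moment `[2]_q^r Σ (-q)^S (Π χ(mᵢ)) [S + y]_q^n [S + x + y]_q^m`, where
`S = m₁ + ⋯ + m_r`. Replacing `(x, y, m, n)` by `(-x, x + y, n, m)` interchanges the two factors of
the mixed moment and turns the left-hand side into the right-hand side.
-/

section Summability

theorem summable_pi_prod_of_nonneg {ι : Type*} [Fintype ι] {α : ι → Type*}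
    {f : ∀ i, α i → ℝ} (hf_nonneg : ∀ i a, 0 ≤ f i a) (hf : ∀ i, Summable (f i)) :
    Summable fun m : ∀ i, α i ↦ ∏ i, f i (m i) := by
  classical
  have prod_nonneg (m : ∀ i, α i) : 0 ≤ ∏ i, f i (m i) :=
    Finset.prod_nonneg fun i _ ↦ hf_nonneg i (m i)
  refine summable_of_sum_le (c := ∏ i, ∑' a, f i a) prod_nonneg fun s ↦ ?_
  let box (i : ι) : Finset (α i) := s.image (· i)
  have subset_box : s ⊆ Fintype.piFinset box := fun m hm ↦
    Fintype.mem_piFinset.2 fun i ↦ Finset.mem_image_of_mem (· i) hm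
  calc ∑ m ∈ s, ∏ i, f i (m i)
      ≤ ∑ m ∈ Fintype.piFinset box, ∏ i, f i (m i) :=
        Finset.sum_le_sum_of_subset_of_nonneg subset_box fun m _ _ ↦ prod_nonneg m
    _ = ∏ i, ∑ a ∈ box i, f i a := (Finset.prod_univ_sum box f).symm
    _ ≤ ∏ i, ∑' a, f i a :=
        Finset.prod_le_prod (fun i _ ↦ Finset.sum_nonneg fun a _ ↦ hf_nonneg i a)
          fun i _ ↦ (hf i).sum_le_tsum (box i) fun a _ ↦ hf_nonneg i a

theorem summable_mul_pow_of_norm_le {ι R : Type*} [NormedRing R] [NormOneClass R]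
    [CompleteSpace R] {w u : ι → R} {C : ℝ} (hw : Summable fun i ↦ ‖w i‖)
    (hu : ∀ i, ‖u i‖ ≤ C) (n : ℕ) : Summable fun i ↦ w i * u i ^ n := by
  refine Summable.of_norm_bounded (hw.mul_right (C ^ n)) fun i ↦ ?_
  calc ‖w i * u i ^ n‖
      ≤ ‖w i‖ * ‖u i‖ ^ n := norm_mul_le_of_le le_rfl (norm_pow_le (u i) n)
    _ ≤ ‖w i‖ * C ^ n := by gcongr; exact hu i

theorem sum_choose_mul_tsum_mul_pow {ι R : Type*} [CommSemiring R] [TopologicalSpace R]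
    [IsTopologicalSemiring R] [T2Space R] {w u : ι → R} {m n : ℕ}
    (h : ∀ k ≤ m, Summable fun i ↦ w i * u i ^ (n + k)) (a b : R) :
    ∑ k ∈ Finset.range (m + 1),
        m.choose k * b ^ k * (∑' i, w i * u i ^ (n + k)) * a ^ (m - k) =
      ∑' i, w i * (u i ^ n * (a + b * u i) ^ m) := by
  have binomial (i : ι) : w i * (u i ^ n * (a + b * u i) ^ m) =
      ∑ k ∈ Finset.range (m + 1),
        m.choose k * b ^ k * a ^ (m - k) * (w i * u i ^ (n + k)) := by
    rw [add_comm a, add_pow, Finset.mul_sum, Finset.mul_sum]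
    exact Finset.sum_congr rfl fun k _ ↦ by ring
  have summable_term : ∀ k ∈ Finset.range (m + 1), Summable fun i ↦ w i * u i ^ (n + k) :=
    fun k hk ↦ h k (Finset.mem_range_succ_iff.1 hk)
  simp_rw [binomial]
  rw [Summable.tsum_finsetSum fun k hk ↦ (summable_term k hk).mul_left _]
  refine Finset.sum_congr rfl fun k hk ↦ ?_
  rw [(summable_term k hk).tsum_mul_left, mul_right_comm]

end Summability

section QNum

variable {q : ℝ}

theorem qNum_add (hq0 : 0 < q) (x z : ℝ) :
    qNum q (x + z) = qNum q x + q ^ x * qNum q z := by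
  simp only [qNum, Real.rpow_add hq0]
  ring

theorem abs_qNum_le_of_le (hq0 : 0 < q) (hq1 : q < 1) {x t : ℝ} (hxt : x ≤ t) :
    |qNum q t| ≤ (1 + q ^ x) / (1 - q) := by
  have one_sub_pos : 0 < 1 - q := sub_pos.2 hq1
  have rpow_le : q ^ t ≤ q ^ x := Real.rpow_le_rpow_of_exponent_ge hq0 hq1.le hxt
  have rpow_pos : 0 < q ^ t := Real.rpow_pos_of_pos hq0 t
  rw [qNum, abs_div, abs_of_pos one_sub_pos]
  gcongr
  exact abs_le.2 ⟨by linarith, by linarith⟩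

end QNum

/-- The weight `(-q)^{m₁+⋯+m_r} χ(m₁)⋯χ(m_r)` of the multi-index `m` in the series defining
`qEuler`. -/
noncomputable def qEulerWeight {ι : Type*} [Fintype ι] {d : ℕ} (χ : DirichletCharacter ℂ d)
    (q : ℝ) (m : ι → ℕ) : ℂ :=
  (-(q : ℂ)) ^ (∑ i, m i) * ∏ i, χ (m i : ZMod d)

/-- The mixed moment `[2]_q^r Σ (-q)^S (Π χ(mᵢ)) [S + x]_q^n [S + y]_q^m`, `S = m₁ + ⋯ + m_r`. It
interpolates between `qEuler` at `x` (for `m = 0`) and at `y` (for `n = 0`), and both sides of the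
recurrence symmetry are expansions of it. -/
noncomputable def qEulerMixed (r : ℕ) {d : ℕ} (χ : DirichletCharacter ℂ d) (q : ℝ)
    (n m : ℕ) (x y : ℝ) : ℂ :=
  (qNum q 2 : ℂ) ^ r *
    ∑' j : Fin r → ℕ, qEulerWeight χ q j *
      ((qNum q ((∑ i, j i : ℕ) + x) : ℂ) ^ n * (qNum q ((∑ i, j i : ℕ) + y) : ℂ) ^ m)

section QEuler

variable {q : ℝ} {d : ℕ} (χ : DirichletCharacter ℂ d)

theorem norm_qEulerWeight_le {ι : Type*} [Fintype ι] (m : ι → ℕ) :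
    ‖qEulerWeight χ q m‖ ≤ ∏ i, |q| ^ m i := by
  have norm_prod_le_one : ‖∏ i, χ (m i : ZMod d)‖ ≤ 1 := by
    rw [norm_prod]
    exact Finset.prod_le_one (fun i _ ↦ norm_nonneg _) fun i _ ↦ χ.norm_le_one _
  calc ‖qEulerWeight χ q m‖
      = |q| ^ (∑ i, m i) * ‖∏ i, χ (m i : ZMod d)‖ := by
        rw [qEulerWeight, norm_mul, norm_pow, norm_neg, Complex.norm_real, Real.norm_eq_abs]
    _ ≤ |q| ^ (∑ i, m i) := mul_le_of_le_one_right (by positivity) norm_prod_le_one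
    _ = ∏ i, |q| ^ m i := (Finset.prod_pow_eq_pow_sum _ _ _).symm

theorem summable_norm_qEulerWeight {ι : Type*} [Fintype ι] (hq : |q| < 1) :
    Summable fun m : ι → ℕ ↦ ‖qEulerWeight χ q m‖ :=
  .of_nonneg_of_le (fun _ ↦ norm_nonneg _) (norm_qEulerWeight_le χ) <|
    summable_pi_prod_of_nonneg (fun _ _ ↦ by positivity)
      fun _ ↦ summable_geometric_of_lt_one (abs_nonneg q) hq

theorem summable_qEulerWeight_mul_qNum_pow {ι : Type*} [Fintype ι] (hq0 : 0 < q) (hq1 : q < 1)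
    (n : ℕ) (x : ℝ) :
    Summable fun m : ι → ℕ ↦
      qEulerWeight χ q m * (qNum q ((∑ i, m i : ℕ) + x) : ℂ) ^ n := by
  have abs_lt_one : |q| < 1 := by rwa [abs_of_pos hq0]
  refine summable_mul_pow_of_norm_le (summable_norm_qEulerWeight χ abs_lt_one)
    (C := (1 + q ^ x) / (1 - q)) (fun m ↦ ?_) n
  rw [Complex.norm_real, Real.norm_eq_abs]
  exact abs_qNum_le_of_le hq0 hq1 (le_add_of_nonneg_left (Nat.cast_nonneg _))

theorem qEulerMixed_comm (r n m : ℕ) (x y : ℝ) :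
    qEulerMixed r χ q n m x y = qEulerMixed r χ q m n y x := by
  simp only [qEulerMixed, mul_comm]

theorem sum_choose_mul_qEuler_eq_qEulerMixed (hq0 : 0 < q) (hq1 : q < 1) (r m n : ℕ) (x y : ℝ) :
    ∑ k ∈ Finset.range (m + 1),
        ((m.choose k : ℂ) * ((q ^ ((k : ℝ) * x) : ℝ) : ℂ) * qEuler r χ q (n + k) y *
          (qNum q x : ℂ) ^ (m - k)) =
      qEulerMixed r χ q n m y (x + y) := by
  have shift (j : Fin r → ℕ) : (qNum q ((∑ i, j i : ℕ) + (x + y)) : ℂ) =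
      qNum q x + (q ^ x : ℝ) * qNum q ((∑ i, j i : ℕ) + y) := by
    rw [add_left_comm, qNum_add hq0]
    push_cast
    rfl
  have rpow_nat_mul (k : ℕ) : ((q ^ ((k : ℝ) * x) : ℝ) : ℂ) = ((q ^ x : ℝ) : ℂ) ^ k := by
    rw [mul_comm, Real.rpow_mul_natCast hq0.le, Complex.ofReal_pow]
  simp only [qEulerMixed, shift]
  rw [← sum_choose_mul_tsum_mul_pow fun k _ ↦
    summable_qEulerWeight_mul_qNum_pow χ hq0 hq1 (n + k) y, Finset.mul_sum]
  refine Finset.sum_congr rfl fun k _ ↦ ?_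
  simp only [rpow_nat_mul, qEuler, qEulerWeight]
  ring

end QEuler

theorem qEuler_recurrence_symmetry_general (q : ℝ) (hq0 : 0 < q) (hq1 : q < 1)
    (r d : ℕ) (χ : DirichletCharacter ℂ d)
    (m n : ℕ) (x y : ℝ) :
    ∑ k ∈ Finset.range (m + 1),
        ((m.choose k : ℂ) * ((q ^ ((k : ℝ) * x) : ℝ) : ℂ) * qEuler r χ q (n + k) y *
          ((qNum q x : ℝ) : ℂ) ^ (m - k)) =
    ∑ k ∈ Finset.range (n + 1),
        ((n.choose k : ℂ) * ((q ^ (-(k : ℝ) * x) : ℝ) : ℂ) * qEuler r χ q (m + k) (x + y) *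
          ((qNum q (-x) : ℝ) : ℂ) ^ (n - k)) := by
  rw [sum_choose_mul_qEuler_eq_qEulerMixed χ hq0 hq1, qEulerMixed_comm]
  simpa only [neg_mul_comm, neg_add_cancel_left] using
    (sum_choose_mul_qEuler_eq_qEulerMixed χ hq0 hq1 r n m (-x) (x + y)).symm

/-- Equation (15): a two-parameter recurrence symmetry for the generalized
`q`-Euler polynomials. -/
theorem qEuler_recurrence_symmetry (q : ℝ) (hq0 : 0 < q) (hq1 : q < 1)
    (r : ℕ) (hr : 0 < r) (d : ℕ) (hd : Odd d) (χ : DirichletCharacter ℂ d)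
    (m n : ℕ) (x y : ℝ) :
    ∑ k ∈ Finset.range (m + 1),
        ((m.choose k : ℂ) * ((q ^ ((k : ℝ) * x) : ℝ) : ℂ) * qEuler r χ q (n + k) y *
          ((qNum q x : ℝ) : ℂ) ^ (m - k)) =
    ∑ k ∈ Finset.range (n + 1),
        ((n.choose k : ℂ) * ((q ^ (-(k : ℝ) * x) : ℝ) : ℂ) * qEuler r χ q (m + k) (x + y) *
          ((qNum q (-x) : ℝ) : ℂ) ^ (n - k)) :=
  qEuler_recurrence_symmetry_general q hq0 hq1 r d χ m n x y
end

section
/- For odd positive integers a and b, real q with 0<q<1, real x>0, a complex number s, a positive integer r, and a Dirichlet character χ of odd conductor d: ([b]_q^s/[2]_{q^a}^r) · Σ_{j_1,...,j_r=0}^{da-1} (-1)^{j_1+⋯+j_r} (Π_{l=1}^r χ(j_l)) q^{b(j_1+⋯+j_r)} l_{q^a,r}(s, bx + (b/a)(j_1+⋯+j_r) | χ) = [a]_q^s [b]_q^s Σ_{i_1,...,i_r=0}^{db-1} Σ_{j_1,...,j_r=0}^{da-1} Σ_{n_1,...,n_r=0}^∞ (-1)^{Σ_l(i_l+n_l+j_l)}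 (Π_{l=1}^r χ(j_l)χ(i_l)) q^{Σ_l(a·i_l+b·j_l+a·b·d·n_l)} · [ab(x + d·Σ_l n_l) + Σ_l(b·j_l + a·i_l)]_q^{-s}, where all complex powers of positive reals are principal. -/
open scoped BigOperators

/-!
Every `m ∈ ℕ^r` is uniquely `i + d b n` with `0 ≤ i_l < d b` and `n ∈ ℕ^r`. As `χ` has period `d`
and `d b` is odd, splitting the absolutely convergent series of `l_{q^a,r}` along this
decomposition turns `χ(m_l)` into `χ(i_l)` and the sign `(-1)^{m_l}` into `(-1)^{i_l + n_l}`, while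
`[a]_q [y]_{q^a} = [a y]_q` turns the base `q^a` into `q` at the cost of a factor `[a]_q^s`. For
`y = m_1 + ⋯ + m_r + b x + (b/a) (j_1 + ⋯ + j_r)` the number `a y` is the argument on the right.
-/

section PiSeries

theorem summable_fin_prod_apply {β : Type*} {r : ℕ} {f : Fin r → β → ℝ}
    (hf_nonneg : ∀ i b, 0 ≤ f i b) (hf : ∀ i, Summable (f i)) :
    Summable fun m : Fin r → β ↦ ∏ i, f i (m i) := by
  induction r with
  | zero => exact Summable.of_finite
  | succ r ih =>
    have h_tail : Summable fun m : Fin r → β ↦ ∏ i, f i.succ (m i) :=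
      ih (fun i ↦ hf_nonneg i.succ) fun i ↦ hf i.succ
    rw [← (Fin.consEquiv fun _ : Fin (r + 1) ↦ β).summable_iff]
    refine ((hf 0).mul_of_nonneg h_tail (hf_nonneg 0)
      fun m ↦ Finset.prod_nonneg fun i _ ↦ hf_nonneg i.succ (m i)).congr fun p ↦ ?_
    simp [Fin.consEquiv, Fin.prod_univ_succ]

variable {ι : Type*} [Fintype ι] [DecidableEq ι]

/-- Coordinatewise Euclidean division of `ι → ℕ` by `k > 0`: the pair `(i, n)` of a remainder and a
quotient corresponds to `i + k n`. Remainders range over a `Finset.range` box, so that sums over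
the first factor are the finite sums of the multiple `q`-`l`-function identities. -/
def piRangeProdEquiv {k : ℕ} (hk : 0 < k) :
    Fintype.piFinset (fun _ : ι ↦ Finset.range k) × (ι → ℕ) ≃ (ι → ℕ) where
  toFun p l := p.1.1 l + k * p.2 l
  invFun m := (⟨fun l ↦ m l % k, by simp [Nat.mod_lt _ hk]⟩, fun l ↦ m l / k)
  left_inv := by
    rintro ⟨⟨i, hi⟩, n⟩
    have hi_lt : ∀ l, i l < k := by simpa using hi
    ext l
    · simp [Nat.mod_eq_of_lt (hi_lt l)]
    · simp [Nat.add_mul_div_left _ _ hk, Nat.div_eq_of_lt (hi_lt l)]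
  right_inv m := by
    ext l
    exact Nat.mod_add_div (m l) k

theorem tsum_eq_sum_piFinset_range_tsum {E : Type*} [AddCommGroup E] [UniformSpace E]
    [IsUniformAddGroup E] [CompleteSpace E] [T0Space E] {k : ℕ} (hk : 0 < k)
    {f : (ι → ℕ) → E} (hf : Summable f) :
    ∑' m, f m = ∑ i ∈ Fintype.piFinset (fun _ : ι ↦ Finset.range k),
      ∑' n : ι → ℕ, f fun l ↦ i l + k * n l := by
  have hf_pair : Summable fun p ↦ f (piRangeProdEquiv hk p) :=
    (piRangeProdEquiv hk).summable_iff.2 hf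
  rw [← (piRangeProdEquiv hk).tsum_eq f, hf_pair.tsum_prod, tsum_fintype]
  exact Finset.sum_coe_sort _ fun i : ι → ℕ ↦ ∑' n : ι → ℕ, f fun l ↦ i l + k * n l

end PiSeries

theorem neg_pow_sum_add_mul {ι R : Type*} [Fintype ι] [Monoid R] [HasDistribNeg R] (z : R) {k : ℕ}
    (hk : Odd k) (i n : ι → ℕ) :
    (-z) ^ (∑ l, (i l + k * n l)) =
      (-1) ^ (∑ l, (i l + n l)) * z ^ (∑ l, (i l + k * n l)) := by
  simp only [neg_pow z, Finset.sum_add_distrib, ← Finset.mul_sum, pow_add, pow_mul,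
    hk.neg_one_pow]

section QNum

variable {q x y : ℝ}

theorem qNum_pos (hq0 : 0 ≤ q) (hq1 : q < 1) (hx : 0 < x) : 0 < qNum q x :=
  div_pos (sub_pos.2 (Real.rpow_lt_one hq0 hq1 hx)) (sub_pos.2 hq1)

theorem qNum_le_qNum (hq0 : 0 < q) (hq1 : q < 1) (hxy : x ≤ y) : qNum q x ≤ qNum q y :=
  div_le_div_of_nonneg_right
    (sub_le_sub_left (Real.rpow_le_rpow_of_exponent_ge hq0 hq1.le hxy) 1) (sub_pos.2 hq1).le

theorem qNum_le_one_div_one_sub (hq0 : 0 ≤ q) (hq1 : q < 1) : qNum q x ≤ 1 / (1 - q) :=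
  div_le_div_of_nonneg_right (sub_le_self 1 (Real.rpow_nonneg hq0 x)) (sub_pos.2 hq1).le

theorem qNum_mul_qNum_rpow {a : ℝ} (hq0 : 0 ≤ q) (hqa : q ^ a ≠ 1) (y : ℝ) :
    qNum q a * qNum (q ^ a) y = qNum q (a * y) := by
  have hqa_sub : 1 - q ^ a ≠ 0 := sub_ne_zero.2 hqa.symm
  rw [qNum, qNum, qNum, Real.rpow_mul hq0, div_mul_div_comm, mul_comm (1 - q),
    mul_div_mul_left _ _ hqa_sub]

theorem qNum_rpow_cpow_neg {a : ℝ} (hq0 : 0 < q) (hq1 : q < 1) (ha : 0 < a) (hy : 0 < y)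
    (s : ℂ) :
    (qNum (q ^ a) y : ℂ) ^ (-s) = (qNum q a : ℂ) ^ s * (qNum q (a * y) : ℂ) ^ (-s) := by
  have hqa : q ^ a < 1 := Real.rpow_lt_one hq0.le hq1 ha
  have ha_pos : 0 < qNum q a := qNum_pos hq0.le hq1 ha
  have hy_pos : 0 < qNum (q ^ a) y := qNum_pos (Real.rpow_nonneg hq0.le a) hqa hy
  have ha_cpow : (qNum q a : ℂ) ^ s ≠ 0 :=
    Complex.cpow_ne_zero_iff.2 (Or.inl (Complex.ofReal_ne_zero.2 ha_pos.ne'))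
  rw [← qNum_mul_qNum_rpow hq0.le hqa.ne, Complex.ofReal_mul,
    Complex.mul_cpow_ofReal_nonneg ha_pos.le hy_pos.le, Complex.cpow_neg (qNum q a : ℂ),
    mul_inv_cancel_left₀ ha_cpow]

theorem exists_norm_qNum_cpow_le (hq0 : 0 < q) (hq1 : q < 1) (hx : 0 < x) (s : ℂ) :
    ∃ C : ℝ, ∀ y, x ≤ y → ‖(qNum q y : ℂ) ^ s‖ ≤ C := by
  have hx_pos : 0 < qNum q x := qNum_pos hq0.le hq1 hx
  have h_cont : ContinuousOn (fun t : ℝ ↦ t ^ s.re) (Set.Icc (qNum q x) (1 / (1 - q))) :=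
    fun t ht ↦ (Real.continuousAt_rpow_const t s.re
      (Or.inl (hx_pos.trans_le ht.1).ne')).continuousWithinAt
  obtain ⟨C, hC⟩ := isCompact_Icc.exists_bound_of_continuousOn h_cont
  refine ⟨C, fun y hxy ↦ ?_⟩
  rw [Complex.norm_cpow_eq_rpow_re_of_pos (qNum_pos hq0.le hq1 (hx.trans_le hxy))]
  exact (le_abs_self _).trans
    (hC _ ⟨qNum_le_qNum hq0 hq1 hxy, qNum_le_one_div_one_sub hq0.le hq1⟩)

end QNum

section QL

/-- The term of index `m` in the series defining `qL q r χ s x`, without the factor `[2]_q^r`. -/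
noncomputable def qLTerm (q : ℝ) {r d : ℕ} (χ : DirichletCharacter ℂ d) (s : ℂ) (x : ℝ)
    (m : Fin r → ℕ) : ℂ :=
  (-(q : ℂ)) ^ (∑ i, m i) * (∏ i, χ (m i : ZMod d)) *
    (qNum q ((∑ i, m i : ℕ) + x) : ℂ) ^ (-s)

variable {q x : ℝ} {r d : ℕ}

theorem norm_qLTerm_le (hq0 : 0 ≤ q) (χ : DirichletCharacter ℂ d) (s : ℂ) (m : Fin r → ℕ) :
    ‖qLTerm q χ s x m‖ ≤
      (∏ i, q ^ m i) * ‖(qNum q ((∑ i, m i : ℕ) + x) : ℂ) ^ (-s)‖ := by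
  have hχ : ∏ i, ‖χ (m i : ZMod d)‖ ≤ 1 :=
    Finset.prod_le_one (fun _ _ ↦ norm_nonneg _) fun _ _ ↦ χ.norm_le_one _
  rw [qLTerm, norm_mul, norm_mul, norm_pow, norm_neg, Complex.norm_real,
    Real.norm_of_nonneg hq0, norm_prod, Finset.prod_pow_eq_pow_sum]
  gcongr
  exact mul_le_of_le_one_right (by positivity) hχ

theorem summable_qLTerm (hq0 : 0 < q) (hq1 : q < 1) (hx : 0 < x)
    (χ : DirichletCharacter ℂ d) (s : ℂ) :
    Summable fun m : Fin r → ℕ ↦ qLTerm q χ s x m := by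
  obtain ⟨C, hC⟩ := exists_norm_qNum_cpow_le hq0 hq1 hx (-s)
  have h_geom : Summable fun m : Fin r → ℕ ↦ ∏ i, q ^ m i :=
    summable_fin_prod_apply (fun _ n ↦ pow_nonneg hq0.le n)
      fun _ ↦ summable_geometric_of_lt_one hq0.le hq1
  refine Summable.of_norm_bounded (h_geom.mul_right C) fun m ↦
    (norm_qLTerm_le hq0.le χ s m).trans ?_
  gcongr
  exact hC _ (le_add_of_nonneg_left (Nat.cast_nonneg _))

theorem qL_eq_sum_tsum_qLTerm (hq0 : 0 < q) (hq1 : q < 1) (hx : 0 < x)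
    (χ : DirichletCharacter ℂ d) (s : ℂ) {k : ℕ} (hk : 0 < k) :
    qL q r χ s x = (qNum q 2 : ℂ) ^ r *
      ∑ i ∈ Fintype.piFinset (fun _ : Fin r ↦ Finset.range k),
        ∑' n : Fin r → ℕ, qLTerm q χ s x fun l ↦ i l + k * n l := by
  rw [← tsum_eq_sum_piFinset_range_tsum hk (summable_qLTerm hq0 hq1 hx χ s)]
  rfl

theorem qLTerm_pow_add_mul {a k : ℕ} (hq0 : 0 < q) (hq1 : q < 1) (ha : 0 < a) (hx : 0 < x)
    (χ : DirichletCharacter ℂ d) (s : ℂ) (hk : Odd k) (hdk : d ∣ k) (i n : Fin r → ℕ) :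
    qLTerm (q ^ a) χ s x (fun l ↦ i l + k * n l) =
      (qNum q a : ℂ) ^ s *
        ((-1) ^ (∑ l, (i l + n l)) * (∏ l, χ (i l : ZMod d)) *
          (q : ℂ) ^ (a * ∑ l, (i l + k * n l)) *
          (qNum q (a * ((∑ l, (i l + k * n l) : ℕ) + x)) : ℂ) ^ (-s)) := by
  have hχ (l : Fin r) : χ ((i l + k * n l : ℕ) : ZMod d) = χ (i l : ZMod d) := by
    simp [(ZMod.natCast_eq_zero_iff k d).2 hdk]
  have h_base := qNum_rpow_cpow_neg hq0 hq1 (Nat.cast_pos.2 ha)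
    (add_pos_of_nonneg_of_pos (Nat.cast_nonneg (∑ l, (i l + k * n l))) hx) s
  rw [Real.rpow_natCast] at h_base
  rw [qLTerm, h_base, neg_pow_sum_add_mul _ hk, Complex.ofReal_pow, ← pow_mul]
  simp only [hχ]
  ring

theorem qL_pow_div_qNum_two_pow {a k : ℕ} (hq0 : 0 < q) (hq1 : q < 1) (ha : 0 < a) (hx : 0 < x)
    (χ : DirichletCharacter ℂ d) (s : ℂ) (hk : Odd k) (hdk : d ∣ k) :
    qL (q ^ a) r χ s x / (qNum (q ^ a) 2 : ℂ) ^ r =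
      (qNum q a : ℂ) ^ s * ∑ i ∈ Fintype.piFinset (fun _ : Fin r ↦ Finset.range k),
        ∑' n : Fin r → ℕ,
          ((-1) ^ (∑ l, (i l + n l)) * (∏ l, χ (i l : ZMod d)) *
            (q : ℂ) ^ (a * ∑ l, (i l + k * n l)) *
            (qNum q (a * ((∑ l, (i l + k * n l) : ℕ) + x)) : ℂ) ^ (-s)) := by
  have hqa0 : 0 < q ^ a := pow_pos hq0 a
  have hqa1 : q ^ a < 1 := pow_lt_one₀ hq0.le hq1 ha.ne'
  have h_two : (qNum (q ^ a) 2 : ℂ) ^ r ≠ 0 :=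
    pow_ne_zero r (Complex.ofReal_ne_zero.2 (qNum_pos hqa0.le hqa1 two_pos).ne')
  rw [qL_eq_sum_tsum_qLTerm hqa0 hqa1 hx χ s hk.pos, mul_div_cancel_left₀ _ h_two]
  simp only [qLTerm_pow_add_mul hq0 hq1 ha hx χ s hk hdk, tsum_mul_left, Finset.mul_sum]

end QL

theorem qL_triple_sum_general (a b : ℕ) (ha0 : 0 < a) (hb : Odd b)
    (q : ℝ) (hq0 : 0 < q) (hq1 : q < 1) (x : ℝ) (hx : 0 < x) (s : ℂ)
    (r : ℕ) (d : ℕ) (hd : Odd d) (χ : DirichletCharacter ℂ d) :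
    (((qNum q b : ℝ) : ℂ) ^ s / ((qNum (q ^ a) 2 : ℝ) : ℂ) ^ r) *
      ∑ j ∈ Fintype.piFinset (fun _ : Fin r => Finset.range (d * a)),
        ((-1 : ℂ) ^ (∑ l, j l) * (∏ l, χ ((j l : ZMod d))) * (q : ℂ) ^ (b * ∑ l, j l) *
          qL (q ^ a) r χ s (b * x + ((b : ℝ) / a) * (∑ l, j l))) =
    ((qNum q a : ℝ) : ℂ) ^ s * ((qNum q b : ℝ) : ℂ) ^ s *
      ∑ i ∈ Fintype.piFinset (fun _ : Fin r => Finset.range (d * b)),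
        ∑ j ∈ Fintype.piFinset (fun _ : Fin r => Finset.range (d * a)),
          ∑' m : Fin r → ℕ,
            ((-1 : ℂ) ^ (∑ l, (i l + m l + j l)) *
              (∏ l, χ ((j l : ZMod d)) * χ ((i l : ZMod d))) *
              (q : ℂ) ^ (∑ l, (a * i l + b * j l + a * b * d * m l)) *
              ((qNum q ((a : ℝ) * b * (x + (d : ℝ) * ∑ l, m l) +
                ∑ l, ((b : ℝ) * j l + (a : ℝ) * i l)) : ℝ) : ℂ) ^ (-s)) := by
  have haR : (a : ℝ) ≠ 0 := Nat.cast_ne_zero.2 ha0.ne'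
  have hbR : (0 : ℝ) < b := Nat.cast_pos.2 hb.pos
  rw [Finset.sum_comm, Finset.mul_sum, Finset.mul_sum]
  refine Finset.sum_congr rfl fun j _ ↦ ?_
  have hy : 0 < b * x + ((b : ℝ) / a) * (∑ l, j l) := by positivity
  have h_arg (i m : Fin r → ℕ) :
      (a : ℝ) * ((∑ l, (i l + d * b * m l) : ℕ) + (b * x + ((b : ℝ) / a) * (∑ l, j l))) =
        a * b * (x + d * ∑ l, m l) + ∑ l, ((b : ℝ) * j l + a * i l) := by
    push_cast
    simp only [Finset.sum_add_distrib, ← Finset.mul_sum]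
    field_simp
    ring
  rw [div_mul_eq_mul_div, mul_div_assoc, mul_div_assoc,
    qL_pow_div_qNum_two_pow hq0 hq1 ha0 hy χ s (hd.mul hb) (dvd_mul_right d b)]
  simp only [h_arg, Finset.mul_sum, ← tsum_mul_left]
  refine Finset.sum_congr rfl fun i _ ↦ tsum_congr fun m ↦ ?_
  simp only [Finset.sum_add_distrib, Finset.prod_mul_distrib, ← Finset.mul_sum]
  ring

/-- Equation (7): the twisted multiple sum expression for the weighted sum of
multiple `q`-`l`-functions. -/
theorem qL_triple_sum (a b : ℕ) (ha0 : 0 < a) (ha : Odd a) (hb0 : 0 < b) (hb : Odd b)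
    (q : ℝ) (hq0 : 0 < q) (hq1 : q < 1) (x : ℝ) (hx : 0 < x) (s : ℂ)
    (r : ℕ) (hr : 0 < r) (d : ℕ) (hd : Odd d) (χ : DirichletCharacter ℂ d) :
    (((qNum q b : ℝ) : ℂ) ^ s / ((qNum (q ^ a) 2 : ℝ) : ℂ) ^ r) *
      ∑ j ∈ Fintype.piFinset (fun _ : Fin r => Finset.range (d * a)),
        ((-1 : ℂ) ^ (∑ l, j l) * (∏ l, χ ((j l : ZMod d))) * (q : ℂ) ^ (b * ∑ l, j l) *
          qL (q ^ a) r χ s (b * x + ((b : ℝ) / a) * (∑ l, j l))) =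
    ((qNum q a : ℝ) : ℂ) ^ s * ((qNum q b : ℝ) : ℂ) ^ s *
      ∑ i ∈ Fintype.piFinset (fun _ : Fin r => Finset.range (d * b)),
        ∑ j ∈ Fintype.piFinset (fun _ : Fin r => Finset.range (d * a)),
          ∑' m : Fin r → ℕ,
            ((-1 : ℂ) ^ (∑ l, (i l + m l + j l)) *
              (∏ l, χ ((j l : ZMod d)) * χ ((i l : ZMod d))) *
              (q : ℂ) ^ (∑ l, (a * i l + b * j l + a * b * d * m l)) *
              ((qNum q ((a : ℝ) * b * (x + (d : ℝ) * ∑ l, m l) +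
                ∑ l, ((b : ℝ) * j l + (a : ℝ) * i l)) : ℝ) : ℂ) ^ (-s)) :=
  qL_triple_sum_general a b ha0 hb q hq0 hq1 x hx s r d hd χ
end
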